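/- arXiv:1202.2935 — 2 statements merged into one kernel-verified Lean document; each statement's English description precedes it below -/
import Mathlib

section
/- There exists a three-dimensional complex linear subspace W of ℂ^6 such that for each i = 1, 2, 3, 4 the intersection W ∩ S_i is one-dimensional, and for all i ≠ j the intersection (W ∩ S_i) ∩ S_j is the zero subspace. (Equivalently: there is a 2-plane in ℙ^5 that intersects each of the four 2-planes Σ_1, Σ_2, Σ_3, Σ_4 in a single point not lying on any of the other three planes.) -/
/-!
The six coordinates of `ℂ⁶` can be identified with the edges of the complete graph `K₄` so that
the `i`-th coordinate subspace consists of the vectors supported on the edges at the vertex `i`.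
Take for `W` the cut space of `K₄`, the image of the coboundary `u ↦ (u b - u a)` indexed by the
edges `(a, b)`. Its kernel is the line of constant functions, so `W` has dimension `4 - 1`. A
coboundary `δ u` is supported on the edges at `i` exactly when `u` is constant on the remaining
vertices, that is, when `δ u` is a multiple of `δ eᵢ`; and `eᵢ` is not constant away from a vertex
`j ≠ i`. The same works for every graph with at least three vertices that stays connected when any
one of them is removed.
-/

/-- The four three-dimensional coordinate subspaces of ℂ^6 (affine cones over
the torus-invariant 2-planes Σ₁,…,Σ₄ in ℙ⁵):
`S 0 = {x : x₀ = x₃ = x₅ = 0}`, `S 1 = {x : x₀ = x₂ = x₄ = 0}`,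
`S 2 = {x : x₁ = x₂ = x₃ = 0}`, `S 3 = {x : x₁ = x₄ = x₅ = 0}`. -/
noncomputable def S : Fin 4 → Submodule ℂ (Fin 6 → ℂ) :=
  ![ LinearMap.ker (LinearMap.proj 0 : (Fin 6 → ℂ) →ₗ[ℂ] ℂ) ⊓
       LinearMap.ker (LinearMap.proj 3 : (Fin 6 → ℂ) →ₗ[ℂ] ℂ) ⊓
       LinearMap.ker (LinearMap.proj 5 : (Fin 6 → ℂ) →ₗ[ℂ] ℂ),
     LinearMap.ker (LinearMap.proj 0 : (Fin 6 → ℂ) →ₗ[ℂ] ℂ) ⊓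
       LinearMap.ker (LinearMap.proj 2 : (Fin 6 → ℂ) →ₗ[ℂ] ℂ) ⊓
       LinearMap.ker (LinearMap.proj 4 : (Fin 6 → ℂ) →ₗ[ℂ] ℂ),
     LinearMap.ker (LinearMap.proj 1 : (Fin 6 → ℂ) →ₗ[ℂ] ℂ) ⊓
       LinearMap.ker (LinearMap.proj 2 : (Fin 6 → ℂ) →ₗ[ℂ] ℂ) ⊓
       LinearMap.ker (LinearMap.proj 3 : (Fin 6 → ℂ) →ₗ[ℂ] ℂ),
     LinearMap.ker (LinearMap.proj 1 : (Fin 6 → ℂ) →ₗ[ℂ] ℂ) ⊓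
       LinearMap.ker (LinearMap.proj 4 : (Fin 6 → ℂ) →ₗ[ℂ] ℂ) ⊓
       LinearMap.ker (LinearMap.proj 5 : (Fin 6 → ℂ) →ₗ[ℂ] ℂ) ]

/-- The graph on `V` underlying a directed multigraph in which the edge `e : E` runs from `s e` to
`t e`; loops and multiplicities are discarded. -/
def edgeGraph {V E : Type*} (s t : E → V) : SimpleGraph V :=
  SimpleGraph.fromRel fun a b => ∃ e, s e = a ∧ t e = b

/-- The coboundary of a directed multigraph with source and target maps `s` and `t`, from functions
on the vertices to functions on the edges. Its range is the cut space. -/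
def coboundary (R : Type*) [Ring R] {V E : Type*} (s t : E → V) : (V → R) →ₗ[R] (E → R) :=
  LinearMap.funLeft R R t - LinearMap.funLeft R R s

/-- The coordinate subspace of functions supported on the star of the vertex `i`, i.e. on the edges
incident to `i`, in a directed multigraph with source and target maps `s` and `t`. -/
def starSubmodule (R : Type*) [Ring R] {V E : Type*} (s t : E → V) (i : V) :
    Submodule R (E → R) :=
  Submodule.pi {e | s e ≠ i ∧ t e ≠ i} fun _ => ⊥

section Graph

variable {V : Type*} {G : SimpleGraph V}

lemma exists_forall_eq_of_preconnected {α : Type*} [Nonempty α] (hG : G.Preconnected)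
    {f : V → α} (hf : ∀ a b, G.Adj a b → f a = f b) : ∃ c, ∀ a, f a = c := by
  have eq_of_walk {a b : V} (p : G.Walk a b) : f a = f b := by
    induction p with
    | nil => rfl
    | cons hab _ ih => exact (hf _ _ hab).trans ih
  rcases isEmpty_or_nonempty V with hV | ⟨⟨b⟩⟩
  · exact ⟨Classical.arbitrary α, hV.elim⟩
  · exact ⟨f b, fun a => (hG a b).elim eq_of_walk⟩

lemma preconnected_of_forall_preconnected_induce_compl (hV : 3 ≤ Cardinal.mk V)
    (hG : ∀ i, (G.induce {i}ᶜ).Preconnected) : G.Preconnected := by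
  intro a b
  obtain ⟨c, hca, hcb⟩ := Cardinal.exists_ne_ne_of_three_le hV a b
  exact (hG c ⟨a, hca.symm⟩ ⟨b, hcb.symm⟩).map (SimpleGraph.Embedding.induce _).toHom

end Graph

section Coboundary

variable {R V E : Type*} [Ring R] {s t : E → V}

lemma coboundary_apply (u : V → R) (e : E) : coboundary R s t u e = u (t e) - u (s e) := rfl

lemma mem_starSubmodule {i : V} {x : E → R} :
    x ∈ starSubmodule R s t i ↔ ∀ e, s e ≠ i → t e ≠ i → x e = 0 := by
  simp [starSubmodule, Submodule.mem_pi]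

lemma coboundary_const (c : R) : coboundary R s t (fun _ => c) = 0 := by
  ext e
  rw [coboundary_apply, sub_self, Pi.zero_apply]

lemma eq_of_edgeGraph_adj {u : V → R} {T : Set V} {a b : V} (hab : (edgeGraph s t).Adj a b)
    (ha : a ∈ T) (hb : b ∈ T) (hu : ∀ e, s e ∈ T → t e ∈ T → coboundary R s t u e = 0) :
    u a = u b := by
  obtain ⟨-, ⟨e, rfl, rfl⟩ | ⟨e, rfl, rfl⟩⟩ := hab
  · exact (sub_eq_zero.mp (hu e ha hb)).symm
  · exact sub_eq_zero.mp (hu e hb ha)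

lemma coboundary_eq_zero_iff (hG : (edgeGraph s t).Preconnected) {u : V → R} :
    coboundary R s t u = 0 ↔ ∃ c, ∀ a, u a = c := by
  constructor
  · intro hu
    exact exists_forall_eq_of_preconnected hG fun a b hab =>
      eq_of_edgeGraph_adj hab (Set.mem_univ a) (Set.mem_univ b) fun e _ _ => congrFun hu e
  · rintro ⟨c, hc⟩
    rw [funext hc, coboundary_const]

lemma coboundary_mem_starSubmodule_iff {i : V}
    (hG : ((edgeGraph s t).induce {i}ᶜ).Preconnected) {u : V → R} :
    coboundary R s t u ∈ starSubmodule R s t i ↔ ∃ c, ∀ a ≠ i, u a = c := by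
  rw [mem_starSubmodule]
  constructor
  · intro hu
    obtain ⟨c, hc⟩ := exists_forall_eq_of_preconnected (f := fun a : ({i}ᶜ : Set V) => u a) hG
      fun a b hab => eq_of_edgeGraph_adj hab a.2 b.2 hu
    exact ⟨c, fun a ha => hc ⟨a, ha⟩⟩
  · rintro ⟨c, hc⟩ e hs ht
    rw [coboundary_apply, hc _ hs, hc _ ht, sub_self]

lemma ker_coboundary (hG : (edgeGraph s t).Preconnected) :
    LinearMap.ker (coboundary R s t) = Submodule.span R {1} := by
  ext u
  simp only [LinearMap.mem_ker, coboundary_eq_zero_iff hG, Submodule.mem_span_singleton,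
    funext_iff, Pi.smul_apply, Pi.one_apply, smul_eq_mul, mul_one, eq_comm]

lemma range_coboundary_inf_starSubmodule [DecidableEq V] {i : V}
    (hG : ((edgeGraph s t).induce {i}ᶜ).Preconnected) :
    LinearMap.range (coboundary R s t) ⊓ starSubmodule R s t i =
      Submodule.span R {coboundary R s t (Pi.single i 1)} := by
  apply le_antisymm
  · rintro _ ⟨⟨u, rfl⟩, hu⟩
    obtain ⟨c, hc⟩ := (coboundary_mem_starSubmodule_iff hG).mp hu
    have hu_eq : u = (fun _ => c) + (u i - c) • Pi.single i 1 := by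
      ext a
      rcases eq_or_ne a i with rfl | ha
      · simp
      · simp [ha, hc a ha]
    rw [hu_eq, map_add, coboundary_const, zero_add, map_smul]
    exact Submodule.smul_mem _ _ (Submodule.mem_span_singleton_self _)
  · rw [Submodule.span_singleton_le_iff_mem]
    exact ⟨LinearMap.mem_range_self _ _, (coboundary_mem_starSubmodule_iff hG).mpr
      ⟨0, fun a ha => Pi.single_eq_of_ne ha 1⟩⟩

lemma coboundary_single_notMem_starSubmodule [Nontrivial R] [DecidableEq V] {i j : V}
    (hV : 3 ≤ Cardinal.mk V) (hG : ((edgeGraph s t).induce {j}ᶜ).Preconnected) (hij : i ≠ j) :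
    coboundary R s t (Pi.single i 1) ∉ starSubmodule R s t j := by
  rw [coboundary_mem_starSubmodule_iff hG]
  rintro ⟨c, hc⟩
  obtain ⟨k, hki, hkj⟩ := Cardinal.exists_ne_ne_of_three_le hV i j
  have h_single : (Pi.single i 1 : V → R) i = (Pi.single i 1 : V → R) k :=
    (hc i hij).trans (hc k hkj).symm
  simp [hki] at h_single

end Coboundary

section DivisionRing

variable {K V E : Type*} [DivisionRing K] [Fintype V] {s t : E → V}

lemma finrank_range_coboundary_add_one [Nonempty V] (hG : (edgeGraph s t).Preconnected) :
    Module.finrank K (LinearMap.range (coboundary K s t)) + 1 = Fintype.card V := by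
  have hker : Module.finrank K (LinearMap.ker (coboundary K s t)) = 1 := by
    rw [ker_coboundary hG]
    exact finrank_span_singleton one_ne_zero
  rw [← hker, LinearMap.finrank_range_add_finrank_ker, Module.finrank_fintype_fun_eq_card]

theorem exists_plane_meeting_each_Sigma_in_one_point_general (hV : 3 ≤ Fintype.card V)
    (hG : ∀ i, ((edgeGraph s t).induce {i}ᶜ).Preconnected) :
    ∃ W : Submodule K (E → K),
      Module.finrank K W + 1 = Fintype.card V ∧
      (∀ i, Module.finrank K ↥(W ⊓ starSubmodule K s t i) = 1) ∧
      (∀ i j, i ≠ j → (W ⊓ starSubmodule K s t i) ⊓ starSubmodule K s t j = ⊥) := by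
  classical
  have : Nontrivial V := Fintype.one_lt_card_iff_nontrivial.mp (by lia)
  have hV' : 3 ≤ Cardinal.mk V := by
    rw [Cardinal.mk_fintype]
    exact_mod_cast hV
  refine ⟨LinearMap.range (coboundary K s t), finrank_range_coboundary_add_one
    (preconnected_of_forall_preconnected_induce_compl hV' hG), fun i => ?_, fun i j hij => ?_⟩
  · obtain ⟨j, hji⟩ := exists_ne i
    have hne : coboundary K s t (Pi.single i 1) ≠ 0 := fun h =>
      coboundary_single_notMem_starSubmodule hV' (hG j) hji.symm (h ▸ zero_mem _)
    rw [range_coboundary_inf_starSubmodule (hG i), finrank_span_singleton hne]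
  · rw [range_coboundary_inf_starSubmodule (hG i), inf_comm, ← disjoint_iff]
    exact Submodule.disjoint_span_singleton_of_notMem
      (coboundary_single_notMem_starSubmodule hV' (hG j) hij)

end DivisionRing

/-- The sources of the edges of `K₄`, numbered as the coordinates of `ℂ⁶`: the edge joining `i`
and `j` is the only coordinate that vanishes neither on `S i` nor on `S j`. -/
def edgeSource : Fin 6 → Fin 4 := ![2, 0, 0, 1, 0, 1]

/-- The targets of the edges of `K₄`, numbered as in `edgeSource`. -/
def edgeTarget : Fin 6 → Fin 4 := ![3, 1, 3, 3, 2, 2]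

lemma edgeGraph_edgeSource_edgeTarget : edgeGraph edgeSource edgeTarget = ⊤ := by
  have hjoin : ∀ a b, a ≠ b → (∃ e, edgeSource e = a ∧ edgeTarget e = b) ∨
      ∃ e, edgeSource e = b ∧ edgeTarget e = a := by decide
  ext a b
  exact ⟨SimpleGraph.Adj.ne, fun hab => ⟨hab, hjoin a b hab⟩⟩

lemma S_eq_starSubmodule : S = starSubmodule ℂ edgeSource edgeTarget := by
  ext i x
  rw [mem_starSubmodule]
  fin_cases i <;> simp [S, edgeSource, edgeTarget, Fin.forall_fin_succ, and_assoc]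

/-- There exists a three-dimensional complex linear subspace `W` of `ℂ^6` such that
each intersection `W ⊓ S i` is one-dimensional and `(W ⊓ S i) ⊓ S j = 0` for `i ≠ j`;
i.e. a 2-plane in ℙ⁵ meeting each Σᵢ in a single point not on the other three planes. -/
theorem exists_plane_meeting_each_Sigma_in_one_point :
    ∃ W : Submodule ℂ (Fin 6 → ℂ),
      Module.finrank ℂ W = 3 ∧
      (∀ i : Fin 4, Module.finrank ℂ ↥(W ⊓ S i) = 1) ∧
      (∀ i j : Fin 4, i ≠ j → (W ⊓ S i) ⊓ S j = ⊥) := by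
  rw [S_eq_starSubmodule]
  simpa using exists_plane_meeting_each_Sigma_in_one_point_general (K := ℂ) (s := edgeSource)
    (t := edgeTarget) (by simp) (by simp [edgeGraph_edgeSource_edgeTarget])
end

section
/- Every vector of ℝ^5 is a nonnegative real linear combination of the ten vectors e_1, e_2, e_3, e_4, e_5, (-1,-1,-1,-1,-1), (1,1,1,0,0), (1,0,0,1,1), (-1,0,-1,0,-1), (-1,-1,0,-1,0); that is, these ten ray vectors positively span ℝ^5. (This is the underlying fact for the completeness of the toric varieties whose fans have this 1-skeleton.) -/
/-!
The ten rays span `ℝ^5` linearly, since the standard basis is among them, and they sum to zero.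
Adding a large multiple of this relation to any linear combination of the rays makes all its
coefficients nonnegative without changing its value.
-/

/-- The ten ray vectors `e₁,…,e₅, (-1,-1,-1,-1,-1), (1,1,1,0,0), (1,0,0,1,1),
(-1,0,-1,0,-1), (-1,-1,0,-1,0)` in `ℝ^5`: the columns of the matrix `Aᵀ`, i.e. the
primitive ray generators of the 1-skeleton of the toric variety `W`. -/
def ray : Fin 10 → (Fin 5 → ℝ) :=
  ![ ![1, 0, 0, 0, 0],
     ![0, 1, 0, 0, 0],
     ![0, 0, 1, 0, 0],
     ![0, 0, 0, 1, 0],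
     ![0, 0, 0, 0, 1],
     ![-1, -1, -1, -1, -1],
     ![1, 1, 1, 0, 0],
     ![1, 0, 0, 1, 1],
     ![-1, 0, -1, 0, -1],
     ![-1, -1, 0, -1, 0] ]

section PositiveRelation

variable {ι K V : Type*} [DivisionRing K] [LinearOrder K] [IsStrictOrderedRing K]
  {a : ι → K}

theorem exists_forall_nonneg_add_mul [Finite ι] (ha : ∀ i, 0 < a i) (t : ι → K) :
    ∃ M : K, ∀ i, 0 ≤ t i + M * a i := by
  obtain ⟨M, hM⟩ := Finite.exists_le fun i => -t i / a i
  refine ⟨M, fun i => ?_⟩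
  have : -t i ≤ M * a i := (div_le_iff₀ (ha i)).mp (hM i)
  exact neg_le_iff_add_nonneg'.mp this

theorem exists_nonneg_eq_sum_smul_of_mem_span [Fintype ι] [AddCommGroup V] [Module K V]
    {w : ι → V} (ha : ∀ i, 0 < a i) (hrel : ∑ i, a i • w i = 0) {x : V}
    (hx : x ∈ Submodule.span K (Set.range w)) :
    ∃ c : ι → K, (∀ i, 0 ≤ c i) ∧ x = ∑ i, c i • w i := by
  obtain ⟨t, rfl⟩ := (Submodule.mem_span_range_iff_exists_fun K).mp hx
  obtain ⟨M, hM⟩ := exists_forall_nonneg_add_mul ha t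
  refine ⟨fun i => t i + M * a i, hM, ?_⟩
  calc
    ∑ i, t i • w i = ∑ i, t i • w i + M • ∑ i, a i • w i := by rw [hrel, smul_zero, add_zero]
    _ = ∑ i, (t i + M * a i) • w i := by
      simp only [Finset.smul_sum, ← Finset.sum_add_distrib, add_smul, mul_smul]

end PositiveRelation

theorem sum_ray : ∑ k, ray k = 0 := by
  ext i
  fin_cases i <;> simp [ray, Fin.sum_univ_succ]

theorem ray_castLE (i : Fin 5) : ray (i.castLE (by decide)) = Pi.single i 1 := by
  ext j
  fin_cases i <;> fin_cases j <;> simp [ray]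

theorem span_range_ray : Submodule.span ℝ (Set.range ray) = ⊤ := by
  rw [eq_top_iff, ← (Pi.basisFun ℝ (Fin 5)).span_eq]
  refine Submodule.span_mono ?_
  rintro _ ⟨i, rfl⟩
  exact ⟨i.castLE (by decide), by rw [ray_castLE, Pi.basisFun_apply]⟩

/-- Every vector of `ℝ^5` is a nonnegative real linear combination of the ten ray
vectors: they positively span `ℝ^5`.  (This underlies the completeness of the toric
varieties whose fans have this 1-skeleton.) -/
theorem rays_positively_span :
    ∀ v : Fin 5 → ℝ, ∃ c : Fin 10 → ℝ,
      (∀ k : Fin 10, 0 ≤ c k) ∧ v = ∑ k : Fin 10, c k • ray k := by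
  intro v
  have hrel : ∑ k, (1 : ℝ) • ray k = 0 := by simp only [one_smul, sum_ray]
  have hv : v ∈ Submodule.span ℝ (Set.range ray) := span_range_ray ▸ Submodule.mem_top
  exact exists_nonneg_eq_sum_smul_of_mem_span (fun _ => one_pos) hrel hv
end
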